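/- Let C be a category with pullbacks which has Kähler differentials, and let X be an object of C. Then X is formally unramified if and only if Ω_X is a zero object in Ab(C/X). -/

import Mathlib

open CategoryTheory CategoryTheory.Limits

universe v u

/-- A Beck module over `Y`: an abelian group object in the overcategory `C/Y`,
presented by its underlying morphism `φ : M ⟶ Y`, a unit (zero) section `unit`,
an addition `add` over `Y`, and a negation `neg` over `Y`, satisfying the abelian
group axioms on generalized elements (equivalently, via Yoneda, making it an
abelian group object of `C/Y`). -/
structure BeckModule {C : Type u} [Category.{v} C] [HasPullbacks C] (Y : C) where
  M : C
  φ : M ⟶ Y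
  unit : Y ⟶ M
  unit_φ : unit ≫ φ = 𝟙 Y
  add : pullback φ φ ⟶ M
  add_φ : add ≫ φ = pullback.fst φ φ ≫ φ
  neg : M ⟶ M
  neg_φ : neg ≫ φ = φ
  add_assoc : ∀ {T : C} (a b c : T ⟶ M) (hab : a ≫ φ = b ≫ φ) (hbc : b ≫ φ = c ≫ φ),
    pullback.lift (pullback.lift a b hab ≫ add) c
        (by rw [Category.assoc, add_φ, ← Category.assoc, pullback.lift_fst, hab, hbc]) ≫ add =
      pullback.lift a (pullback.lift b c hbc ≫ add)
        (by rw [Category.assoc, add_φ, ← Category.assoc, pullback.lift_fst, hab]) ≫ add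
  add_comm : ∀ {T : C} (a b : T ⟶ M) (h : a ≫ φ = b ≫ φ),
    pullback.lift a b h ≫ add = pullback.lift b a h.symm ≫ add
  zero_add : ∀ {T : C} (a : T ⟶ M),
    pullback.lift (a ≫ φ ≫ unit) a
        (by rw [Category.assoc, Category.assoc, unit_φ, Category.comp_id]) ≫ add = a
  add_neg : ∀ {T : C} (a : T ⟶ M),
    pullback.lift a (a ≫ neg) (by rw [Category.assoc, neg_φ]) ≫ add = a ≫ φ ≫ unit

/-- A Beck torsor structure on `γ : Z ⟶ Y`: `γ` is an effective epimorphism, equipped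
with a Beck module `mod` over `Y` and a group action `τ : M ×_Y Z ⟶ Z` in `C/Y`
(satisfying the unit and associativity axioms for an action of the group object `M`),
such that the shear morphism `(τ, π_Z) : M ×_Y Z ⟶ Z ×_Y Z` is an isomorphism in `C/Y`. -/
structure BeckTorsor {C : Type u} [Category.{v} C] [HasPullbacks C] {Z Y : C} (γ : Z ⟶ Y) where
  mod : BeckModule Y
  effEpi : EffectiveEpi γ
  τ : pullback mod.φ γ ⟶ Z
  τ_γ : τ ≫ γ = pullback.snd mod.φ γ ≫ γ
  act_unit : ∀ {T : C} (z : T ⟶ Z),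
    pullback.lift (z ≫ γ ≫ mod.unit) z
        (by rw [Category.assoc, Category.assoc, mod.unit_φ, Category.comp_id]) ≫ τ = z
  act_assoc : ∀ {T : C} (a b : T ⟶ mod.M) (z : T ⟶ Z)
      (hab : a ≫ mod.φ = b ≫ mod.φ) (hbz : b ≫ mod.φ = z ≫ γ),
    pullback.lift (pullback.lift a b hab ≫ mod.add) z
        (by rw [Category.assoc, mod.add_φ, ← Category.assoc, pullback.lift_fst, hab, hbz]) ≫ τ =
      pullback.lift a (pullback.lift b z hbz ≫ τ)
        (by rw [Category.assoc, τ_γ, ← Category.assoc, pullback.lift_snd, hab, hbz]) ≫ τ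
  shear_iso : IsIso (pullback.lift τ (pullback.snd mod.φ γ) τ_γ :
    pullback mod.φ γ ⟶ pullback γ γ)

/-- An object `X` is formally unramified if, for every Beck torsor `γ : Z ⟶ Y` in `C`,
the canonical map `Hom(X, Z) → Hom(X, Y)` given by composition with `γ` is injective. -/
def FormallyUnramified {C : Type u} [Category.{v} C] [HasPullbacks C] (X : C) : Prop :=
  ∀ ⦃Z Y : C⦄ (γ : Z ⟶ Y), BeckTorsor γ →
    Function.Injective (fun ψ : X ⟶ Z => ψ ≫ γ)

/-- A morphism of Beck modules over `Y`: a morphism over `Y` commuting with the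
addition (i.e. a morphism of abelian group objects in `C/Y`). -/
@[ext]
structure BeckModuleHom {C : Type u} [Category.{v} C] [HasPullbacks C] {Y : C}
    (N₁ N₂ : BeckModule Y) where
  f : N₁.M ⟶ N₂.M
  w : f ≫ N₂.φ = N₁.φ
  map_add : ∀ {T : C} (a b : T ⟶ N₁.M) (h : a ≫ N₁.φ = b ≫ N₁.φ),
    (pullback.lift a b h ≫ N₁.add) ≫ f =
      pullback.lift (a ≫ f) (b ≫ f)
        (by rw [Category.assoc, Category.assoc, w, h]) ≫ N₂.add

/-- The category `Ab(C/Y)` of Beck modules over `Y`. -/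
instance BeckModule.category {C : Type u} [Category.{v} C] [HasPullbacks C] (Y : C) :
    Category (BeckModule Y) where
  Hom := BeckModuleHom
  id N := ⟨𝟙 N.M, Category.id_comp _, by intro T a b h; simp⟩
  comp {N₁ N₂ N₃} f g := ⟨f.f ≫ g.f, by rw [Category.assoc, g.w, f.w], by
    intro T a b h
    rw [← Category.assoc, f.map_add, g.map_add]
    simp⟩
  id_comp f := by apply BeckModuleHom.ext; simp
  comp_id f := by apply BeckModuleHom.ext; simp
  assoc f g h := by apply BeckModuleHom.ext; simp

/-- The forgetful functor `Ab(C/Y) ⥤ C/Y`. -/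
def forgetBeck {C : Type u} [Category.{v} C] [HasPullbacks C] (Y : C) :
    BeckModule Y ⥤ Over Y where
  obj N := Over.mk N.φ
  map {N₁ N₂} f := Over.homMk f.f f.w
  map_id N := by ext; simp; rfl
  map_comp f g := by ext; simp; rfl

/-!
The maps `T ⟶ N.M` over a fixed `t : T ⟶ Y` form an abelian group, and for a torsor `γ : Z ⟶ Y`
under `N` two maps `T ⟶ Z` with the same image in `Y` differ by the action of an element of that
group. Over `T = X`, pulling `N` back along `X ⟶ Y` turns this element into a section of a Beck
module over `X`. As every Beck module is a torsor under itself, `X` is formally unramified if and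
only if Beck modules over `X` have no nonzero sections. Sections of `N` are the morphisms
`Ω_X ⟶ N`, and these vanish for all `N` precisely when `Ω_X` is zero.
-/

lemma exists_eq_pullback_lift {C : Type u} [Category.{v} C] {A B Y T : C} {f : A ⟶ Y} {g : B ⟶ Y}
    [HasPullback f g] (x : T ⟶ pullback f g) :
    ∃ (a : T ⟶ A) (b : T ⟶ B) (h : a ≫ f = b ≫ g), x = pullback.lift a b h :=
  ⟨x ≫ pullback.fst f g, x ≫ pullback.snd f g, by simp only [Category.assoc, pullback.condition],
    pullback.hom_ext (pullback.lift_fst _ _ _).symm (pullback.lift_snd _ _ _).symm⟩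

section

variable {C : Type u} [Category.{v} C] [HasPullbacks C] {X Y T : C}

namespace BeckModule

/-- A generalized element of the Beck module `N` over `t : T ⟶ Y`, that is, a morphism from `t` to
`N.φ` in the overcategory of `Y`; for `t = 𝟙 Y` it is a section of `N`. -/
@[ext]
structure Point (N : BeckModule Y) (t : T ⟶ Y) where
  hom : T ⟶ N.M
  hom_φ : hom ≫ N.φ = t

namespace Point

variable {N : BeckModule Y} {t : T ⟶ Y}

noncomputable instance : Add (N.Point t) where
  add a b :=
    ⟨pullback.lift a.hom b.hom (a.hom_φ.trans b.hom_φ.symm) ≫ N.add, by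
      rw [Category.assoc, N.add_φ, pullback.lift_fst_assoc, a.hom_φ]⟩

instance : Zero (N.Point t) where
  zero := ⟨t ≫ N.unit, by rw [Category.assoc, N.unit_φ, Category.comp_id]⟩

instance : Neg (N.Point t) where
  neg a := ⟨a.hom ≫ N.neg, by rw [Category.assoc, N.neg_φ, a.hom_φ]⟩

lemma add_hom (a b : N.Point t) :
    (a + b).hom = pullback.lift a.hom b.hom (a.hom_φ.trans b.hom_φ.symm) ≫ N.add :=
  rfl

lemma zero_hom : (0 : N.Point t).hom = t ≫ N.unit :=
  rfl

lemma neg_hom (a : N.Point t) : (-a).hom = a.hom ≫ N.neg :=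
  rfl

protected lemma add_comm (a b : N.Point t) : a + b = b + a :=
  Point.ext (N.add_comm _ _ _)

protected lemma zero_add (a : N.Point t) : 0 + a = a := by
  obtain ⟨a, rfl⟩ := a
  ext
  simpa only [add_hom, zero_hom, Category.assoc] using N.zero_add a

protected lemma add_neg (a : N.Point t) : a + -a = 0 := by
  obtain ⟨a, rfl⟩ := a
  ext
  simpa only [add_hom, zero_hom, neg_hom, Category.assoc] using N.add_neg a

noncomputable instance : AddCommGroup (N.Point t) where
  add_assoc a b c := Point.ext (N.add_assoc _ _ _ _ _)
  add_comm := Point.add_comm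
  zero_add := Point.zero_add
  add_zero a := by rw [Point.add_comm, Point.zero_add]
  neg_add_cancel a := by rw [Point.add_comm, Point.add_neg]
  nsmul := nsmulRec
  zsmul := zsmulRec

/-- The homomorphism on points over `t` induced by a morphism of Beck modules. -/
noncomputable def map {N₁ N₂ : BeckModule Y} (g : N₁ ⟶ N₂) (t : T ⟶ Y) :
    N₁.Point t →+ N₂.Point t :=
  AddMonoidHom.mk' (fun a ↦ ⟨a.hom ≫ g.f, by rw [Category.assoc, g.w, a.hom_φ]⟩)
    fun a b ↦ Point.ext (g.map_add a.hom b.hom _)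

/-- Points over `t` as morphisms of the overcategory into the underlying object of `N`. -/
def equivOverHom : N.Point t ≃ (Over.mk t ⟶ (forgetBeck Y).obj N) where
  toFun a := Over.homMk a.hom a.hom_φ
  invFun s := ⟨s.left, Over.w s⟩

end Point

section ZeroMorphisms

lemma unit_comp_f {N₁ N₂ : BeckModule Y} (g : N₁ ⟶ N₂) : N₁.unit ≫ g.f = N₂.unit := by
  have map_zero := congrArg Point.hom (Point.map g (𝟙 Y)).map_zero
  simpa only [Point.map, AddMonoidHom.mk'_apply, Point.zero_hom, Category.id_comp] using map_zero

/-- The zero morphism of Beck modules, factoring through the unit section of the target. -/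
def zeroHom (N₁ N₂ : BeckModule Y) : BeckModuleHom N₁ N₂ where
  f := N₁.φ ≫ N₂.unit
  w := by rw [Category.assoc, N₂.unit_φ, Category.comp_id]
  map_add a b h := by
    have zero_add_zero := congrArg Point.hom (add_zero (0 : N₂.Point (a ≫ N₁.φ)))
    simp only [Point.add_hom, Point.zero_hom, Category.assoc] at zero_add_zero
    simp only [Category.assoc, reassoc_of% N₁.add_φ, pullback.lift_fst_assoc, ← reassoc_of% h,
      zero_add_zero]

instance : HasZeroMorphisms (BeckModule Y) where
  zero N₁ N₂ := ⟨zeroHom N₁ N₂⟩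
  comp_zero {N₁ N₂} g N₃ := BeckModuleHom.ext <| by
    change g.f ≫ N₂.φ ≫ N₃.unit = N₁.φ ≫ N₃.unit
    rw [← Category.assoc, g.w]
  zero_comp N₁ {N₂ N₃} g := BeckModuleHom.ext <| by
    change (N₁.φ ≫ N₂.unit) ≫ g.f = N₁.φ ≫ N₃.unit
    rw [Category.assoc, unit_comp_f]

lemma isZero_iff_forall_subsingleton_hom {N : BeckModule Y} :
    IsZero N ↔ ∀ P : BeckModule Y, Subsingleton (N ⟶ P) :=
  ⟨fun hN _ ↦ ⟨hN.eq_of_src⟩, fun hN ↦ (IsZero.iff_id_eq_zero N).2 ((hN N).elim _ _)⟩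

end ZeroMorphisms

section Torsor

variable (N : BeckModule Y)

/-- The shear morphism `(a, b) ↦ (a + b, b)` of a Beck module acting on itself. -/
noncomputable abbrev shear : pullback N.φ N.φ ⟶ pullback N.φ N.φ :=
  pullback.lift N.add (pullback.snd N.φ N.φ) (N.add_φ.trans pullback.condition)

lemma lift_comp_shear {t : T ⟶ Y} (a b : N.Point t) :
    pullback.lift a.hom b.hom (a.hom_φ.trans b.hom_φ.symm) ≫ N.shear =
      pullback.lift (a + b).hom b.hom ((a + b).hom_φ.trans b.hom_φ.symm) := by
  ext <;> simp only [Category.assoc, pullback.lift_fst, pullback.lift_snd, Point.add_hom]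

lemma comp_shear_injective : Function.Injective (fun x : T ⟶ pullback N.φ N.φ ↦ x ≫ N.shear) := by
  intro x y hxy
  obtain ⟨a, b, h, rfl⟩ := exists_eq_pullback_lift x
  obtain ⟨a', b', h', rfl⟩ := exists_eq_pullback_lift y
  obtain rfl : b = b' := by
    simpa only [Category.assoc, pullback.lift_snd] using congrArg (· ≫ pullback.snd _ _) hxy
  have add_eq_add : (⟨a, h⟩ + ⟨b, rfl⟩ : N.Point (b ≫ N.φ)) = ⟨a', h'⟩ + ⟨b, rfl⟩ := by
    ext
    simpa only [Category.assoc, pullback.lift_fst, Point.add_hom]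
      using congrArg (· ≫ pullback.fst _ _) hxy
  obtain rfl : a = a' := congrArg Point.hom (add_right_cancel add_eq_add)
  rfl

lemma comp_shear_surjective : Function.Surjective (fun x : T ⟶ pullback N.φ N.φ ↦ x ≫ N.shear) := by
  intro y
  obtain ⟨c, b, h, rfl⟩ := exists_eq_pullback_lift y
  let c' : N.Point (b ≫ N.φ) := ⟨c, h⟩
  let b' : N.Point (b ≫ N.φ) := ⟨b, rfl⟩
  refine ⟨pullback.lift (c' - b').hom b'.hom _, (N.lift_comp_shear _ _).trans ?_⟩
  simp only [sub_add_cancel, c', b']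

lemma isIso_shear : IsIso N.shear :=
  isIso_of_yoneda_map_bijective _ fun _ ↦ ⟨N.comp_shear_injective, N.comp_shear_surjective⟩

/-- A Beck module as a torsor under itself, acting by addition. -/
noncomputable def torsor : BeckTorsor N.φ where
  mod := N
  effEpi :=
    have : IsSplitEpi N.φ := ⟨⟨⟨N.unit, N.unit_φ⟩⟩⟩
    inferInstance
  τ := N.add
  τ_γ := N.add_φ.trans pullback.condition
  act_unit := N.zero_add
  act_assoc := N.add_assoc
  shear_iso := N.isIso_shear

end Torsor

section Pull

variable {N : BeckModule Y} {f : X ⟶ Y}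

lemma comp_fst_comp_φ {t : T ⟶ X} {a : T ⟶ pullback N.φ f} (h : a ≫ pullback.snd N.φ f = t) :
    (a ≫ pullback.fst N.φ f) ≫ N.φ = t ≫ f := by
  rw [Category.assoc, pullback.condition, reassoc_of% h]

variable (N f) in
/-- The addition of `N.pull f`, induced by the addition of `N` on first components. -/
noncomputable def pullAdd :
    pullback (pullback.snd N.φ f) (pullback.snd N.φ f) ⟶ pullback N.φ f :=
  pullback.lift
    (pullback.lift (pullback.fst _ _ ≫ pullback.fst _ _) (pullback.snd _ _ ≫ pullback.fst _ _)
      ((comp_fst_comp_φ pullback.condition).trans (comp_fst_comp_φ rfl).symm) ≫ N.add)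
    (pullback.fst _ _ ≫ pullback.snd _ _)
    (by rw [Category.assoc, N.add_φ, pullback.lift_fst_assoc, comp_fst_comp_φ rfl])

lemma lift_comp_pullAdd_fst {a b : T ⟶ pullback N.φ f}
    (h : a ≫ pullback.snd N.φ f = b ≫ pullback.snd N.φ f) :
    pullback.lift a b h ≫ N.pullAdd f ≫ pullback.fst N.φ f =
      pullback.lift (a ≫ pullback.fst N.φ f) (b ≫ pullback.fst N.φ f)
        ((comp_fst_comp_φ h).trans (comp_fst_comp_φ rfl).symm) ≫ N.add := by
  rw [pullAdd, pullback.lift_fst, ← Category.assoc]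
  congr 1
  ext <;> simp only [Category.assoc, pullback.lift_fst, pullback.lift_snd,
    pullback.lift_fst_assoc, pullback.lift_snd_assoc]

lemma lift_comp_pullAdd_snd {a b : T ⟶ pullback N.φ f}
    (h : a ≫ pullback.snd N.φ f = b ≫ pullback.snd N.φ f) :
    pullback.lift a b h ≫ N.pullAdd f ≫ pullback.snd N.φ f = a ≫ pullback.snd N.φ f := by
  rw [pullAdd, pullback.lift_snd, pullback.lift_fst_assoc]

variable (N f)

/-- The pullback of a Beck module over `Y` along `f : X ⟶ Y`, a Beck module over `X`. -/
noncomputable def pull : BeckModule X where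
  M := pullback N.φ f
  φ := pullback.snd N.φ f
  unit := pullback.lift (f ≫ N.unit) (𝟙 X)
    (by rw [Category.assoc, N.unit_φ, Category.comp_id, Category.id_comp])
  unit_φ := pullback.lift_snd _ _ _
  add := N.pullAdd f
  add_φ := pullback.lift_snd _ _ _
  neg := pullback.lift (pullback.fst _ _ ≫ N.neg) (pullback.snd _ _)
    (by rw [Category.assoc, N.neg_φ, pullback.condition])
  neg_φ := pullback.lift_snd _ _ _
  add_assoc a b c hab hbc := by
    ext <;> simp only [Category.assoc, lift_comp_pullAdd_fst, lift_comp_pullAdd_snd]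
    exact N.add_assoc _ _ _ _ _
  add_comm a b h := by
    ext <;> simp only [Category.assoc, lift_comp_pullAdd_fst, lift_comp_pullAdd_snd, h]
    exact N.add_comm _ _ _
  zero_add a := by
    ext <;> simp only [Category.assoc, lift_comp_pullAdd_fst, lift_comp_pullAdd_snd,
      pullback.lift_fst, pullback.lift_snd, Category.comp_id]
    simpa only [Category.assoc, pullback.condition_assoc]
      using N.zero_add (a ≫ pullback.fst N.φ f)
  add_neg a := by
    ext <;> simp only [Category.assoc, lift_comp_pullAdd_fst, lift_comp_pullAdd_snd,
      pullback.lift_fst, pullback.lift_snd, Category.comp_id]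
    simpa only [Category.assoc, pullback.condition_assoc]
      using N.add_neg (a ≫ pullback.fst N.φ f)

/-- The universal property of `N.pull f`: its points over `t` are the points of `N` over
`t ≫ f`. -/
noncomputable def pullPointEquiv (t : T ⟶ X) : (N.pull f).Point t ≃ N.Point (t ≫ f) where
  toFun a := ⟨a.hom ≫ pullback.fst N.φ f, comp_fst_comp_φ a.hom_φ⟩
  invFun a := ⟨pullback.lift a.hom t a.hom_φ, pullback.lift_snd _ _ _⟩
  left_inv a := Point.ext <| pullback.hom_ext (pullback.lift_fst _ _ _)
    ((pullback.lift_snd _ _ _).trans a.hom_φ.symm)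
  right_inv _ := Point.ext (pullback.lift_fst _ _ _)

end Pull

end BeckModule

namespace BeckTorsor

variable {Z : C} {γ : Z ⟶ Y} (P : BeckTorsor γ)

lemma exists_point_act_eq {z₁ z₂ : T ⟶ Z} (h : z₁ ≫ γ = z₂ ≫ γ) :
    ∃ m : P.mod.Point (z₂ ≫ γ), pullback.lift m.hom z₂ m.hom_φ ≫ P.τ = z₁ := by
  obtain ⟨k, hk⟩ := ((isIso_iff_yoneda_map_bijective _).1 P.shear_iso T).surjective
    (pullback.lift z₁ z₂ h)
  obtain ⟨m, z, hm, rfl⟩ := exists_eq_pullback_lift k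
  obtain rfl : z = z₂ := by
    simpa only [Category.assoc, pullback.lift_snd] using congrArg (· ≫ pullback.snd γ γ) hk
  refine ⟨⟨m, hm⟩, ?_⟩
  simpa only [Category.assoc, pullback.lift_fst] using congrArg (· ≫ pullback.fst γ γ) hk

lemma comp_injective_of_subsingleton_point (hP : ∀ y : T ⟶ Y, Subsingleton (P.mod.Point y)) :
    Function.Injective (fun z : T ⟶ Z ↦ z ≫ γ) := by
  intro z₁ z₂ (h : z₁ ≫ γ = z₂ ≫ γ)
  obtain ⟨m, rfl⟩ := P.exists_point_act_eq h
  obtain rfl : m = 0 := (hP _).elim _ _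
  simpa only [BeckModule.Point.zero_hom, Category.assoc] using P.act_unit z₂

end BeckTorsor

lemma formallyUnramified_iff_forall_subsingleton_point :
    FormallyUnramified X ↔ ∀ N : BeckModule X, Subsingleton (N.Point (𝟙 X)) := by
  refine ⟨fun hX N ↦ ⟨fun a b ↦ ?_⟩, fun hX Z Y γ P ↦ ?_⟩
  · exact BeckModule.Point.ext (hX N.φ N.torsor (a.hom_φ.trans b.hom_φ.symm))
  · refine P.comp_injective_of_subsingleton_point fun f ↦ ?_
    have subsingleton_point := (P.mod.pullPointEquiv f (𝟙 X)).symm.subsingleton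
    rwa [Category.id_comp] at subsingleton_point

theorem formallyUnramified_iff_isZero_kaehler_general {Ω : BeckModule X}
    (hΩ : (forgetBeck X ⋙ coyoneda.obj (Opposite.op (Over.mk (𝟙 X)))).CorepresentableBy Ω) :
    FormallyUnramified X ↔ IsZero Ω := by
  rw [formallyUnramified_iff_forall_subsingleton_point,
    BeckModule.isZero_iff_forall_subsingleton_hom]
  exact forall_congr' fun N ↦
    (BeckModule.Point.equivOverHom.trans hΩ.homEquiv.symm).subsingleton_congr

end

/-- Main theorem: if `C` has Kähler differentials, then an object `X` of `C` is
formally unramified if and only if `Ω_X = Ω(𝟙 X)` is a zero object in `Ab(C/X)`. -/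
theorem formallyUnramified_iff_isZero_kaehler {C : Type u} [Category.{v} C]
    [HasPullbacks C] (Ω : ∀ Y : C, Over Y ⥤ BeckModule Y)
    (adj : ∀ Y : C, Ω Y ⊣ forgetBeck Y) (X : C) :
    FormallyUnramified X ↔ IsZero ((Ω X).obj (Over.mk (𝟙 X))) := by
  exact formallyUnramified_iff_isZero_kaehler_general ((adj X).corepresentableBy (Over.mk (𝟙 X)))
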